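/- Let λ, μ, ν ∈ P[n]. The map Γ : SVT^λ_{ν−λ}(μ) → SVCT^μ_{ν−μ}(λ), defined by Γ(T) := Ω(Y_T, M'_T) where (X_T,M_T)=Υ^{−1}(T), Y_T=(y_{i,j}) with y_{i,j}=N_{n−i+j,n−i}, N_{i,k} := λ_i + (number of occurrences of i in the top k rows of T), and M'_T := {(n+1−j,i−j) : (i,j)∈M_T}, is injective: if Γ(T) = Γ(T') then T = T'. -/

import Mathlib

/-!
`Γ` is injective because every piece of data it is built from can be read off its value.

* `λ`-dominance says that the array `Y_T` weakly increases in its row index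
  (`ypat_mono`): row `k` of `T`, read from right to left, is a weakly decreasing word
  (`rowPart_sorted`), so some prefix of the row word contains exactly the top `k - 1` rows
  and the entries larger than `m` of row `k`; dominance of this prefix is
  `N_{m+1,k} ≤ N_{m,k-1}` (`ndom_le`).
* For such arrays, `d ≤ y_{i,j}` holds iff the `d`-th box of row `j` of `Ω(y, M)` carries an
  index at most `i` (the entry `v` having index `n + 1 - v`), so `Ω` determines `y` (`omega_le`), and then the marks (`marks_subset`).
* `Y_T` determines the number of `i`'s in row `r` of `T` for `r < i`; for `r = i` it is found
  from the weight, and for `r > i` it is zero (`rowOcc_eq`).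
* The number of `i`'s in row `r` is `x_{i,r} - x_{i-1,r}`, plus one if `(i,r)` is marked
  (`rowOcc_upsilon`), so these numbers and the marks determine the pattern `x`, hence `T`.
-/

/-!
Common combinatorial definitions: partitions, (skew) set-valued tableaux,
contratableaux, reading words, dominance, Gelfand-Tsetlin patterns, and the
maps Υ and Ω.  Partitions are encoded as functions `ℕ → ℕ` whose parts are
`lam 1, lam 2, …` (with `lam 0 = 0` as a normalization).  Tableaux are encoded
as functions `ℕ → ℕ → Finset ℕ` assigning to each box (row, column), both
indexed from `1`, its (finite) set of entries, with value `∅` outside the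
shape. -/

/-- `lam` is a partition with at most `n` nonzero parts `lam 1 ≥ lam 2 ≥ ⋯`. -/
def IsPartition (n : ℕ) (lam : ℕ → ℕ) : Prop :=
  lam 0 = 0 ∧ (∀ i, 1 ≤ i → lam (i + 1) ≤ lam i) ∧ (∀ i, n < i → lam i = 0)

/-- `|lam|`, the sum of the parts of a partition in `P[n]`. -/
def sumParts (n : ℕ) (lam : ℕ → ℕ) : ℕ := ∑ i ∈ Finset.Icc 1 n, lam i

/-- The boxes of the skew Young diagram `lam/mu` (rows indexed from the top,
starting at `1`; columns from the left, starting at `1`). -/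
def SkewBox (lam mu : ℕ → ℕ) (i j : ℕ) : Prop :=
  1 ≤ i ∧ mu i < j ∧ j ≤ lam i

/-- The boxes of the straight Young diagram of `mu`. -/
def ShapeBox (mu : ℕ → ℕ) (i j : ℕ) : Prop :=
  1 ≤ i ∧ 1 ≤ j ∧ j ≤ mu i

/-- A semi-standard set-valued tableau with entries in `[n] = {1, …, n}` on a
given set `box` of boxes (rows indexed from the top): every box carries a
nonempty subset of `[n]`, rows weakly increase from left to right, columns
strictly increase from top to bottom, and the filling vanishes off the shape. -/
def IsSSVT (n : ℕ) (box : ℕ → ℕ → Prop) (T : ℕ → ℕ → Finset ℕ) : Prop :=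
  (∀ i j, box i j → (T i j).Nonempty) ∧
  (∀ i j, box i j → T i j ⊆ Finset.Icc 1 n) ∧
  (∀ i j, ¬ box i j → T i j = ∅) ∧
  (∀ i j, box i j → box i (j + 1) → ∀ a ∈ T i j, ∀ b ∈ T i (j + 1), a ≤ b) ∧
  (∀ i j, box i j → box (i + 1) j → ∀ a ∈ T i j, ∀ b ∈ T (i + 1) j, a < b)

/-- The boxes of the rotated shape `C(lam)` (for `lam ∈ P[n]`): the `j`-th row
from the *bottom* (`1 ≤ j ≤ n`) consists of `lam j` right-justified boxes, in
columns `lam 1 - lam j + 1, …, lam 1`. -/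
def ContraBox (n : ℕ) (lam : ℕ → ℕ) (j c : ℕ) : Prop :=
  1 ≤ j ∧ j ≤ n ∧ lam 1 - lam j < c ∧ c ≤ lam 1

/-- A set-valued contratableau of shape `lam` with entries in `[n]`: a
semi-standard set-valued tableau of shape `C(lam)`.  Here `T j c` is the box in
the `j`-th row from the bottom and column `c`; "columns strictly increase from
top to bottom" says entries of row `j+1` (which lies above row `j`) are
strictly smaller than those below them in row `j`. -/
def IsSVCT (n : ℕ) (lam : ℕ → ℕ) (T : ℕ → ℕ → Finset ℕ) : Prop :=
  (∀ j c, ContraBox n lam j c → (T j c).Nonempty) ∧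
  (∀ j c, ContraBox n lam j c → T j c ⊆ Finset.Icc 1 n) ∧
  (∀ j c, ¬ ContraBox n lam j c → T j c = ∅) ∧
  (∀ j c, ContraBox n lam j c → ContraBox n lam j (c + 1) →
    ∀ a ∈ T j c, ∀ b ∈ T j (c + 1), a ≤ b) ∧
  (∀ j c, ContraBox n lam j c → ContraBox n lam (j + 1) c →
    ∀ a ∈ T (j + 1) c, ∀ b ∈ T j c, a < b)

/-- The entries of one cell, read in decreasing order. -/
def cellWord (S : Finset ℕ) : List ℕ := (S.sort (· ≤ ·)).reverse

/-- The row word: rows are read from top to bottom, each row from right to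
left, the entries of each cell in decreasing order (reading over the rectangle
with `R` rows and `W` columns, which covers the shape; cells off the shape are
empty and contribute nothing). -/
def rowWordRect (R W : ℕ) (T : ℕ → ℕ → Finset ℕ) : List ℕ :=
  ((List.range R).map (fun i =>
    (((List.range W).reverse).map (fun j => cellWord (T (i + 1) (j + 1)))).flatten)).flatten

/-- The column word: columns are read from rightmost to leftmost, each column
from top to bottom, the entries of each cell in decreasing order. -/
def colWordRect (R W : ℕ) (T : ℕ → ℕ → Finset ℕ) : List ℕ :=
  (((List.range W).reverse).map (fun j =>
    ((List.range R).map (fun i => cellWord (T (i + 1) (j + 1)))).flatten)).flatten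

/-- The row word of a contratableau whose rows are indexed from the bottom
(`1, …, n`): rows are read from top to bottom (i.e. row `n` first), each row
from right to left, cell entries in decreasing order. -/
def contraRowWord (n W : ℕ) (T : ℕ → ℕ → Finset ℕ) : List ℕ :=
  (((List.range n).reverse).map (fun j =>
    (((List.range W).reverse).map (fun c => cellWord (T (j + 1) (c + 1)))).flatten)).flatten

/-- A word is dominant if every prefix contains at least as many `i`'s as
`(i+1)`'s, for every `i ≥ 1`. -/
def Dominant (u : List ℕ) : Prop :=
  ∀ t i, 1 ≤ i → (u.take t).count (i + 1) ≤ (u.take t).count i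

/-- The row word of the superstandard tableau `T_lam` of shape and weight
`lam` (its `i`-th row consists of `lam i` many `i`'s), for `lam ∈ P[n]`. -/
def superWord (n : ℕ) (lam : ℕ → ℕ) : List ℕ :=
  ((List.range n).map (fun i => List.replicate (lam (i + 1)) (i + 1))).flatten

/-- A word `u` is `lam`-dominant if `r(T_lam) * u` is dominant. -/
def LamDominant (n : ℕ) (lam : ℕ → ℕ) (u : List ℕ) : Prop :=
  Dominant (superWord n lam ++ u)

/-- The number of occurrences of the entry `v` in row `r` of `T`
(columns `1, …, W`). -/
def rowOcc (W : ℕ) (T : ℕ → ℕ → Finset ℕ) (r v : ℕ) : ℕ :=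
  ∑ c ∈ Finset.Icc 1 W, if v ∈ T r c then 1 else 0

/-- The number of occurrences of the entry `v` in `T` (the `v`-th coordinate
of the weight `wt T`), rows `1, …, R` and columns `1, …, W`. -/
def wtT (R W : ℕ) (T : ℕ → ℕ → Finset ℕ) (v : ℕ) : ℕ :=
  ∑ r ∈ Finset.Icc 1 R, rowOcc W T r v

/-- The total number of entries `|T|` of a set-valued tableau. -/
def sizeT (R W : ℕ) (T : ℕ → ℕ → Finset ℕ) : ℕ :=
  ∑ r ∈ Finset.Icc 1 R, ∑ c ∈ Finset.Icc 1 W, (T r c).card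

/-- A Gelfand-Tsetlin pattern of size `n`: a triangular array of integers
`x i j` (`1 ≤ j ≤ i ≤ n`) with `NE_{i,j} = x i j - x (i-1) j ≥ 0` and
`SE_{i,j} = x (i-1) j - x i (j+1) ≥ 0` for all `1 ≤ j < i ≤ n`, normalized to
vanish outside the triangle. -/
def IsGT (n : ℕ) (x : ℕ → ℕ → ℤ) : Prop :=
  (∀ i j, 1 ≤ j → j < i → i ≤ n → x (i - 1) j ≤ x i j ∧ x i (j + 1) ≤ x (i - 1) j) ∧
  (∀ i j, ¬ (1 ≤ j ∧ j ≤ i ∧ i ≤ n) → x i j = 0)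

/-- A GT pattern in `GT_ℤ(lam)`: bottom row equal to `lam`. -/
def IsGTZ (n : ℕ) (lam : ℕ → ℕ) (x : ℕ → ℕ → ℤ) : Prop :=
  IsGT n x ∧ ∀ j, 1 ≤ j → j ≤ n → x n j = (lam j : ℤ)

/-- A valid set of marks on a GT pattern: `M ⊆ {(i,j) : 1 ≤ j < i ≤ n` and
`SE_{i,j}(x) > 0}`. -/
def MarksOK (n : ℕ) (x : ℕ → ℕ → ℤ) (M : Finset (ℕ × ℕ)) : Prop :=
  ∀ p ∈ M, 1 ≤ p.2 ∧ p.2 < p.1 ∧ p.1 ≤ n ∧ 0 < x (p.1 - 1) p.2 - x p.1 (p.2 + 1)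

/-- A marked GT pattern in `MGT_ℤ(lam)`. -/
def IsMGTZ (n : ℕ) (lam : ℕ → ℕ) (x : ℕ → ℕ → ℤ) (M : Finset (ℕ × ℕ)) : Prop :=
  IsGTZ n lam x ∧ MarksOK n x M

/-- The map `Υ` from marked GT patterns to set-valued tableaux, in closed form:
the entry `i` lies in the box in row `r`, column `c` iff `x_{i-1,r} < c ≤ x_{i,r}`
(the horizontal strip `x^{(i)}/x^{(i-1)}` is filled with `i`'s), or `(i,r) ∈ M`
and `c = x_{i-1,r}` (for a mark, `i` is added to the rightmost box of row `r`
of `X^{(i-1)}`, the box containing `i-1` there). -/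
def Upsilon (n : ℕ) (x : ℕ → ℕ → ℤ) (M : Finset (ℕ × ℕ)) : ℕ → ℕ → Finset ℕ :=
  fun r c => (Finset.Icc 1 n).filter (fun i =>
    (x (i - 1) r < (c : ℤ) ∧ (c : ℤ) ≤ x i r) ∨ ((i, r) ∈ M ∧ (c : ℤ) = x (i - 1) r))

/-- The map `Ω` from marked GT patterns to set-valued contratableaux of shape
`lam`, in closed form.  Rows are indexed from the bottom and the box in row `j`
and column `c` is the `d`-th box from the right where `d = lam 1 + 1 - c`.
The entry `v = n + 1 - i` lies there iff `y_{i-1,j} < d ≤ y_{i,j}` (the boxes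
of `C(y^{(i)})/C(y^{(i-1)})` are filled with `n+1-i`), or `(i,j) ∈ M` and
`d = y_{i-1,j}` (for a mark, `n+1-i` is added to the leftmost box of row `j`
of `Y^{(i-1)}`, the box containing `n+2-i` there). -/
def Omega (n : ℕ) (lam : ℕ → ℕ) (y : ℕ → ℕ → ℤ) (M : Finset (ℕ × ℕ)) : ℕ → ℕ → Finset ℕ :=
  fun j c => (Finset.Icc 1 n).filter (fun v =>
    (y (n - v) j < (lam 1 : ℤ) + 1 - (c : ℤ) ∧ (lam 1 : ℤ) + 1 - (c : ℤ) ≤ y (n + 1 - v) j) ∨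
      ((n + 1 - v, j) ∈ M ∧ (lam 1 : ℤ) + 1 - (c : ℤ) = y (n - v) j))

/-- `N_{i,k} = lam i + (number of occurrences of i in the top k rows of T)`. -/
def Ndom (W : ℕ) (lam : ℕ → ℕ) (T : ℕ → ℕ → Finset ℕ) (i k : ℕ) : ℕ :=
  lam i + ∑ r ∈ Finset.Icc 1 k, rowOcc W T r i

/-- `N↑_{i,k} = mu i + (number of occurrences of i in rows k, k+1, …, n from
the bottom of a contratableau)`. -/
def Nup (n W : ℕ) (mu : ℕ → ℕ) (T : ℕ → ℕ → Finset ℕ) (i k : ℕ) : ℕ :=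
  mu i + ∑ r ∈ Finset.Icc k n, rowOcc W T r i

/-- The GT pattern `Y_T` with entries `y_{i,j} = N_{n-i+j, n-i}` (normalized to
`0` outside the triangle). -/
def Ypat (n W : ℕ) (lam : ℕ → ℕ) (T : ℕ → ℕ → Finset ℕ) : ℕ → ℕ → ℤ :=
  fun i j => if 1 ≤ j ∧ j ≤ i ∧ i ≤ n then (Ndom W lam T (n - i + j) (n - i) : ℤ) else 0

/-- The transported mark set `M' = {(n+1-j, i-j) : (i,j) ∈ M}`. -/
def MarksOf (n : ℕ) (M : Finset (ℕ × ℕ)) : Finset (ℕ × ℕ) :=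
  M.image (fun p => (n + 1 - p.2, p.1 - p.2))

/-- The stable Grothendieck polynomial `G_lam(x_1, …, x_n)`, a polynomial in
variables `X 1, …, X n`. -/
noncomputable def Groth (n : ℕ) (lam : ℕ → ℕ) : MvPolynomial ℕ ℤ :=
  ∑ᶠ T ∈ {T : ℕ → ℕ → Finset ℕ | IsSSVT n (ShapeBox lam) T},
    (-1 : MvPolynomial ℕ ℤ) ^ (sizeT n (lam 1) T - sumParts n lam) *
      ∏ k ∈ Finset.Icc 1 n, MvPolynomial.X k ^ wtT n (lam 1) T k

/-! ### Gelfand–Tsetlin patterns -/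

lemma gt_nonneg {n : ℕ} {mu : ℕ → ℕ} {x : ℕ → ℕ → ℤ} (h : IsGTZ n mu x) :
    ∀ i j, 0 ≤ x i j := by
  obtain ⟨⟨h1, h2⟩, h3⟩ := h
  have key : ∀ k i j, i + k = n → 0 ≤ x i j := by
    intro k
    induction k with
    | zero =>
      intro i j hi
      by_cases hj : 1 ≤ j ∧ j ≤ n
      · obtain rfl : i = n := by omega
        rw [h3 j hj.1 hj.2]; positivity
      · rw [h2 i j (by omega)]
    | succ k ih =>
      intro i j hi
      by_cases hj : 1 ≤ j ∧ j ≤ i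
      · have := (h1 (i + 1) j hj.1 (by omega) (by omega)).2
        have h' := ih (i + 1) (j + 1) (by omega)
        simp only [Nat.add_sub_cancel] at this
        omega
      · rw [h2 i j (by omega)]
  intro i j
  by_cases hi : i ≤ n
  · exact key (n - i) i j (by omega)
  · rw [h2 i j (by omega)]

lemma gt_step {n : ℕ} {mu : ℕ → ℕ} {x : ℕ → ℕ → ℤ} (h : IsGTZ n mu x) (i j : ℕ)
    (hi : i < n) : x i j ≤ x (i + 1) j := by
  by_cases hj : 1 ≤ j ∧ j ≤ i
  · exact (h.1.1 (i + 1) j hj.1 (by omega) (by omega)).1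
  · rw [h.1.2 i j (by omega)]
    exact gt_nonneg h _ _

lemma mono_of_step {n : ℕ} {y : ℕ → ℤ} (h : ∀ i, i < n → y i ≤ y (i + 1)) (a b : ℕ)
    (hab : a ≤ b) (hb : b ≤ n) : y a ≤ y b := by
  induction b, hab using Nat.le_induction with
  | base => exact le_rfl
  | succ b hab ih => exact (ih (by omega)).trans (h b (by omega))

lemma gt_mono {n : ℕ} {mu : ℕ → ℕ} {x : ℕ → ℕ → ℤ} (h : IsGTZ n mu x) (a b j : ℕ)
    (hab : a ≤ b) (hb : b ≤ n) : x a j ≤ x b j :=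
  mono_of_step (y := fun i => x i j) (fun i hi => gt_step h i j hi) a b hab hb

lemma partition_le {n : ℕ} {lam : ℕ → ℕ} (h : IsPartition n lam) (j : ℕ) (hj : 1 ≤ j) :
    lam j ≤ lam 1 := by
  induction j, hj using Nat.le_induction with
  | base => exact le_rfl
  | succ b hb ih => exact (h.2.1 b hb).trans ih

lemma gt_le {n : ℕ} {mu : ℕ → ℕ} {x : ℕ → ℕ → ℤ} (hmu : IsPartition n mu) (h : IsGTZ n mu x)
    (i j : ℕ) (hi : i ≤ n) : x i j ≤ mu 1 := by
  by_cases hj : 1 ≤ j ∧ j ≤ n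
  · refine (gt_mono h i n j hi le_rfl).trans ?_
    rw [h.2 j hj.1 hj.2]
    exact_mod_cast partition_le hmu j hj.1
  · rw [h.1.2 i j (by omega)]; positivity

/-! ### Row contents of `Υ(x, M)` -/

lemma strip_count (W a b : ℕ) (p : Prop) [Decidable p] (hab : a ≤ b) (hb : b ≤ W)
    (hp : p → 1 ≤ a) :
    (∑ c ∈ Finset.Icc 1 W, if (a < c ∧ c ≤ b) ∨ (p ∧ c = a) then 1 else 0)
      = b - a + if p then 1 else 0 := by
  rw [← Finset.card_filter]
  by_cases h : p
  · have : (Finset.Icc 1 W).filter (fun c => (a < c ∧ c ≤ b) ∨ (p ∧ c = a))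
        = Finset.Icc a b := by
      ext c
      have := hp h
      simp only [Finset.mem_filter, Finset.mem_Icc, h, true_and]
      omega
    rw [this, Nat.card_Icc, if_pos h]; omega
  · have : (Finset.Icc 1 W).filter (fun c => (a < c ∧ c ≤ b) ∨ (p ∧ c = a))
        = Finset.Ioc a b := by
      ext c
      simp only [Finset.mem_filter, Finset.mem_Icc, Finset.mem_Ioc, h, false_and, or_false]
      omega
    rw [this, Nat.card_Ioc, if_neg h]; omega

/-- Row `r` of `Υ(x, M)` has one `i` for each box of the strip `x^{(i)}/x^{(i-1)}` in that
row, and one more if `(i, r)` is marked. -/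
lemma rowOcc_upsilon {n : ℕ} {mu : ℕ → ℕ} {x : ℕ → ℕ → ℤ} {M : Finset (ℕ × ℕ)}
    (hmu : IsPartition n mu) (h : IsMGTZ n mu x M) (r i : ℕ) (hi : 1 ≤ i) (hin : i ≤ n) :
    (rowOcc (mu 1) (Upsilon n x M) r i : ℤ)
      = x i r - x (i - 1) r + if (i, r) ∈ M then 1 else 0 := by
  obtain ⟨a, ha⟩ := Int.eq_ofNat_of_zero_le (gt_nonneg h.1 (i - 1) r)
  obtain ⟨b, hb⟩ := Int.eq_ofNat_of_zero_le (gt_nonneg h.1 i r)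
  have hab := gt_mono h.1 (i - 1) i r (by omega) hin
  have hbW := gt_le hmu h.1 i r hin
  rw [ha, hb] at hab
  rw [hb] at hbW
  have hp : (i, r) ∈ M → 1 ≤ a := by
    intro hm
    have h1 := (h.2 _ hm).2.2.2
    have h2 := gt_nonneg h.1 i (r + 1)
    simp only at h1
    omega
  have := strip_count (mu 1) a b ((i, r) ∈ M) (by omega) (by omega) hp
  rw [ha, hb]
  have e : rowOcc (mu 1) (Upsilon n x M) r i = b - a + if (i, r) ∈ M then 1 else 0 := by
    rw [← this]
    unfold rowOcc
    refine Finset.sum_congr rfl fun c _ => ?_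
    refine if_congr ?_ rfl rfl
    simp only [Upsilon, Finset.mem_filter, Finset.mem_Icc, ha, hb, hi, hin, true_and,
      Nat.cast_lt, Nat.cast_le, Nat.cast_inj]
  rw [e]
  push_cast [Nat.cast_sub (show a ≤ b by omega)]
  ring

lemma upsilon_bounds {n : ℕ} {mu : ℕ → ℕ} {x : ℕ → ℕ → ℤ} {M : Finset (ℕ × ℕ)}
    (h : IsMGTZ n mu x M) {r c i : ℕ} (hm : i ∈ Upsilon n x M r c) :
    i ≤ n ∧ 1 ≤ i ∧ x (i - 1) r ≤ c ∧ c ≤ x i r := by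
  simp only [Upsilon, Finset.mem_filter, Finset.mem_Icc] at hm
  obtain ⟨⟨h1, h2⟩, h3⟩ := hm
  have := gt_mono h.1 (i - 1) i r (by omega) h2
  refine ⟨h2, h1, ?_⟩
  rcases h3 with h3 | ⟨_, h3⟩ <;> omega

lemma upsilon_row_le {n : ℕ} {mu : ℕ → ℕ} {x : ℕ → ℕ → ℤ} {M : Finset (ℕ × ℕ)}
    (h : IsMGTZ n mu x M) {r c c' a b : ℕ} (hc : c < c') (ha : a ∈ Upsilon n x M r c)
    (hb : b ∈ Upsilon n x M r c') : a ≤ b := by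
  obtain ⟨a1, a2, a3, a4⟩ := upsilon_bounds h ha
  obtain ⟨b1, b2, b3, b4⟩ := upsilon_bounds h hb
  by_contra hlt
  have := gt_mono h.1 b (a - 1) r (by omega) (by omega)
  omega

/-! ### Row words and dominance -/

/-- The part of the row word contributed by row `r`. -/
def rowPart (W : ℕ) (T : ℕ → ℕ → Finset ℕ) (r : ℕ) : List ℕ :=
  (((List.range W).reverse).map (fun j => cellWord (T r (j + 1)))).flatten

lemma rowWordRect_succ (R W : ℕ) (T : ℕ → ℕ → Finset ℕ) :
    rowWordRect (R + 1) W T = rowWordRect R W T ++ rowPart W T (R + 1) := by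
  simp [rowWordRect, rowPart, List.range_succ]

lemma rowWordRect_prefix (R R' W : ℕ) (T : ℕ → ℕ → Finset ℕ) (h : R ≤ R') :
    rowWordRect R W T <+: rowWordRect R' W T := by
  induction R', h using Nat.le_induction with
  | base => exact List.prefix_rfl
  | succ b hb ih =>
    rw [rowWordRect_succ]
    exact ih.trans (List.prefix_append _ _)

lemma count_cellWord (S : Finset ℕ) (v : ℕ) :
    (cellWord S).count v = if v ∈ S then 1 else 0 := by
  unfold cellWord
  rw [List.count_reverse]
  split_ifs with h
  · exact List.count_eq_one_of_mem (Finset.sort_nodup _ _) ((Finset.mem_sort _).2 h)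
  · exact List.count_eq_zero_of_not_mem fun h' => h ((Finset.mem_sort _).1 h')

lemma count_rowPart (W : ℕ) (T : ℕ → ℕ → Finset ℕ) (r v : ℕ) :
    (rowPart W T r).count v = rowOcc W T r v := by
  induction W with
  | zero => simp [rowPart, rowOcc]
  | succ W ih =>
    have e : rowPart (W + 1) T r = cellWord (T r (W + 1)) ++ rowPart W T r := by
      simp [rowPart, List.range_succ]
    rw [e, List.count_append, ih, count_cellWord]
    unfold rowOcc
    rw [Finset.sum_Icc_succ_top (by omega)]
    ring

lemma count_rowWordRect (R W : ℕ) (T : ℕ → ℕ → Finset ℕ) (v : ℕ) :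
    (rowWordRect R W T).count v = ∑ r ∈ Finset.Icc 1 R, rowOcc W T r v := by
  induction R with
  | zero => simp [rowWordRect]
  | succ R ih =>
    rw [rowWordRect_succ, List.count_append, ih, count_rowPart,
      Finset.sum_Icc_succ_top (by omega)]

lemma count_superWord (n : ℕ) (lam : ℕ → ℕ) (v : ℕ) :
    (superWord n lam).count v = if 1 ≤ v ∧ v ≤ n then lam v else 0 := by
  induction n with
  | zero => simp [superWord]; omega
  | succ n ih =>
    have e : superWord (n + 1) lam
        = superWord n lam ++ List.replicate (lam (n + 1)) (n + 1) := by
      simp [superWord, List.range_succ]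
    rw [e, List.count_append, ih, List.count_replicate]
    by_cases h : v = n + 1
    · subst h; simp
    · have : ((n + 1 == v) = true) ↔ False := by simp; omega
      simp only [this, if_false]
      split_ifs <;> omega

lemma rowPart_sorted {n : ℕ} {mu : ℕ → ℕ} {x : ℕ → ℕ → ℤ} {M : Finset (ℕ × ℕ)}
    (h : IsMGTZ n mu x M) (W r : ℕ) :
    (rowPart W (Upsilon n x M) r).Pairwise (fun a b => b ≤ a) := by
  induction W with
  | zero => simp [rowPart]
  | succ W ih =>
    have e : rowPart (W + 1) (Upsilon n x M) r
        = cellWord (Upsilon n x M r (W + 1)) ++ rowPart W (Upsilon n x M) r := by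
      simp [rowPart, List.range_succ]
    rw [e, List.pairwise_append]
    refine ⟨?_, ih, ?_⟩
    · unfold cellWord
      rw [List.pairwise_reverse]
      exact Finset.pairwise_sort _ _
    · intro a ha b hb
      simp only [cellWord, List.mem_reverse, Finset.mem_sort] at ha
      simp only [rowPart, cellWord, List.mem_flatten, List.mem_map, List.mem_reverse,
        List.mem_range] at hb
      obtain ⟨l, ⟨c, hc, rfl⟩, hb⟩ := hb
      simp only [List.mem_reverse, Finset.mem_sort] at hb
      exact upsilon_row_le h (by omega) hb ha

/-- A weakly decreasing word has a prefix containing all its letters `m + 1` and none of its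
letters `m`. -/
lemma exists_prefix_of_sorted (L : List ℕ) (m : ℕ) (h : L.Pairwise (fun a b => b ≤ a)) :
    ∃ p, p <+: L ∧ p.count (m + 1) = L.count (m + 1) ∧ p.count m = 0 := by
  induction L with
  | nil => exact ⟨[], by simp⟩
  | cons a L ih =>
    rw [List.pairwise_cons] at h
    by_cases ha : m + 1 ≤ a
    · obtain ⟨p, hp, h1, h2⟩ := ih h.2
      refine ⟨a :: p, by simpa using hp, ?_, ?_⟩
      · simp [List.count_cons, h1]
      · rw [List.count_cons_of_ne (by omega), h2]
    · refine ⟨[], by simp, ?_, by simp⟩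
      symm
      rw [List.count_nil]
      refine List.count_eq_zero_of_not_mem fun hm => ?_
      rcases List.mem_cons.1 hm with hm | hm
      · omega
      · have := h.1 _ hm; omega

lemma ndom_le {n : ℕ} {lam mu : ℕ → ℕ} {x : ℕ → ℕ → ℤ} {M : Finset (ℕ × ℕ)}
    (h : IsMGTZ n mu x M) (W : ℕ)
    (hdom : LamDominant n lam (rowWordRect n W (Upsilon n x M))) (k m : ℕ) (hk : k < n)
    (hm : 1 ≤ m) (hmn : m < n) :
    Ndom W lam (Upsilon n x M) (m + 1) (k + 1) ≤ Ndom W lam (Upsilon n x M) m k := by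
  obtain ⟨p, hp, h1, h2⟩ := exists_prefix_of_sorted _ m (rowPart_sorted h W (k + 1))
  have hpre : superWord n lam ++ (rowWordRect k W (Upsilon n x M) ++ p) <+:
      superWord n lam ++ rowWordRect n W (Upsilon n x M) := by
    rw [List.prefix_append_right_inj]
    refine List.IsPrefix.trans ?_ (rowWordRect_prefix (k + 1) n W _ hk)
    rw [rowWordRect_succ, List.prefix_append_right_inj]
    exact hp
  have := hdom (superWord n lam ++ (rowWordRect k W (Upsilon n x M) ++ p)).length m hm
  rw [← List.prefix_iff_eq_take.1 hpre] at this
  simp only [List.count_append, count_superWord, count_rowWordRect, h1, h2,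
    count_rowPart] at this
  rw [if_pos (by omega), if_pos (by omega)] at this
  unfold Ndom
  rw [Finset.sum_Icc_succ_top (by omega)]
  omega

lemma ypat_nonneg (n W : ℕ) (lam : ℕ → ℕ) (T : ℕ → ℕ → Finset ℕ) (i j : ℕ) :
    0 ≤ Ypat n W lam T i j := by
  unfold Ypat
  split_ifs <;> positivity

lemma ypat_mono {n : ℕ} {lam mu : ℕ → ℕ} {x : ℕ → ℕ → ℤ} {M : Finset (ℕ × ℕ)}
    (h : IsMGTZ n mu x M) (W : ℕ)
    (hdom : LamDominant n lam (rowWordRect n W (Upsilon n x M))) (j a b : ℕ)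
    (hab : a ≤ b) (hb : b ≤ n) :
    Ypat n W lam (Upsilon n x M) a j ≤ Ypat n W lam (Upsilon n x M) b j := by
  refine mono_of_step (y := fun i => Ypat n W lam (Upsilon n x M) i j) ?_ a b hab hb
  intro i hi
  by_cases hj : 1 ≤ j ∧ j ≤ i
  · have := ndom_le h W hdom (n - (i + 1)) (n - (i + 1) + j) (by omega) (by omega) (by omega)
    simp only [Ypat]
    rw [if_pos (by omega), if_pos (by omega)]
    rw [show n - i + j = n - (i + 1) + j + 1 by omega, show n - i = n - (i + 1) + 1 by omega]
    exact_mod_cast this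
  · have e : Ypat n W lam (Upsilon n x M) i j = 0 := by
      unfold Ypat
      rw [if_neg (by omega)]
    simp only [e]
    exact ypat_nonneg _ _ _ _ _ _

lemma ypat_last_le {n : ℕ} {lam : ℕ → ℕ} (hlam : IsPartition n lam) (W : ℕ)
    (T : ℕ → ℕ → Finset ℕ) (j : ℕ) : Ypat n W lam T n j ≤ lam 1 := by
  unfold Ypat
  split_ifs with h
  · simpa [Ndom] using partition_le hlam j h.1
  · positivity

/-! ### Recovering the pattern and the marks from `Ω` -/

/-- One half of the recovery of `y` from `Ω(y, M)`. The smallest index `i₀` with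
`d ≤ y i₀ j` is the one whose strip contains the `d`-th box of row `j`, so it occurs in that
box of `Ω(y', M')` too, which forces `d ≤ y' i₀ j`. -/
lemma omega_le {n : ℕ} {lam : ℕ → ℕ} {y y' : ℕ → ℕ → ℤ} {M M' : Finset (ℕ × ℕ)} (j : ℕ)
    (hy : ∀ a b, a ≤ b → b ≤ n → y a j ≤ y b j)
    (hy' : ∀ a b, a ≤ b → b ≤ n → y' a j ≤ y' b j)
    (h0 : y 0 j = 0) (h0' : ∀ i, 0 ≤ y' i j) (hlast : y n j ≤ lam 1)
    (heq : Omega n lam y M = Omega n lam y' M') (i : ℕ) (hi : i ≤ n) :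
    y i j ≤ y' i j := by
  by_contra hlt
  push Not at hlt
  have hex : ∃ i0, y i j ≤ y i0 j := ⟨i, le_rfl⟩
  classical
  have hspec := Nat.find_spec hex
  have hmin := fun k => Nat.find_min hex (m := k)
  have hle : Nat.find hex ≤ i := Nat.find_min' hex le_rfl
  set i0 := Nat.find hex
  have hpos := h0' i
  have hi0 : i0 ≠ 0 := by
    intro e
    rw [e, h0] at hspec
    omega
  have hprev := hmin (i0 - 1) (by omega)
  have hbound := hy i n hi le_rfl
  obtain ⟨c, hc⟩ := Int.eq_ofNat_of_zero_le
    (show 0 ≤ (lam 1 : ℤ) + 1 - y i j by omega)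
  have hd : (lam 1 : ℤ) + 1 - (c : ℤ) = y i j := by omega
  have hmem : n + 1 - i0 ∈ Omega n lam y M j c := by
    simp only [Omega, Finset.mem_filter, Finset.mem_Icc, hd]
    rw [show n - (n + 1 - i0) = i0 - 1 by omega, show n + 1 - (n + 1 - i0) = i0 by omega]
    exact ⟨by omega, Or.inl ⟨by omega, hspec⟩⟩
  rw [heq] at hmem
  simp only [Omega, Finset.mem_filter, Finset.mem_Icc, hd] at hmem
  rw [show n - (n + 1 - i0) = i0 - 1 by omega, show n + 1 - (n + 1 - i0) = i0 by omega] at hmem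
  have m1 := hy' i0 i hle hi
  have m2 := hy' (i0 - 1) i (by omega) hi
  rcases hmem.2 with h | h <;> omega

/-- Once the patterns agree, the marks of `Ω` can be read off as well: a marked index sits in
the box `d = y_{i-1,j}`, which is outside its own strip. -/
lemma marks_subset {n : ℕ} {lam : ℕ → ℕ} {x x' y y' : ℕ → ℕ → ℤ} {M M' : Finset (ℕ × ℕ)}
    (hM : MarksOK n x M) (hM' : MarksOK n x' M')
    (hyy : ∀ i j, i ≤ n → y i j = y' i j) (hle : ∀ i j, i ≤ n → y i j ≤ lam 1)
    (heq : Omega n lam y (MarksOf n M) = Omega n lam y' (MarksOf n M')) : M ⊆ M' := by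
  rintro ⟨i, j⟩ hm
  obtain ⟨h1, h2, h3, -⟩ := hM _ hm
  simp only at h1 h2 h3
  have hb := hle (n - j) (i - j) (by omega)
  obtain ⟨c, hc⟩ := Int.eq_ofNat_of_zero_le
    (show 0 ≤ (lam 1 : ℤ) + 1 - y (n - j) (i - j) by omega)
  have hd : (lam 1 : ℤ) + 1 - (c : ℤ) = y (n - j) (i - j) := by omega
  have hmem : j ∈ Omega n lam y (MarksOf n M) (i - j) c := by
    simp only [Omega, Finset.mem_filter, Finset.mem_Icc, hd]
    refine ⟨by omega, Or.inr ⟨?_, trivial⟩⟩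
    exact Finset.mem_image.2 ⟨(i, j), hm, rfl⟩
  rw [heq] at hmem
  simp only [Omega, Finset.mem_filter, Finset.mem_Icc, hd, hyy (n - j) (i - j) (by omega)] at hmem
  rcases hmem.2 with h | ⟨h, -⟩
  · omega
  · obtain ⟨⟨a, b⟩, hab, e⟩ := Finset.mem_image.1 h
    obtain ⟨g1, g2, g3, -⟩ := hM' _ hab
    simp only [Prod.mk.injEq] at e g1 g2 g3
    obtain rfl : b = j := by omega
    obtain rfl : a = i := by omega
    exact hab

/-! ### Recovering the row contents of `T` -/

/-- Rows strictly below row `i` of `Υ(x, M)` contain no `i`. -/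
lemma rowOcc_zero {n : ℕ} {mu : ℕ → ℕ} {x : ℕ → ℕ → ℤ} {M : Finset (ℕ × ℕ)}
    (hmu : IsPartition n mu) (h : IsMGTZ n mu x M) (r i : ℕ) (hi : 1 ≤ i) (hin : i ≤ n)
    (hr : i < r) : rowOcc (mu 1) (Upsilon n x M) r i = 0 := by
  have := rowOcc_upsilon hmu h r i hi hin
  rw [h.1.1.2 i r (by omega), h.1.1.2 (i - 1) r (by omega), if_neg] at this
  · simpa using this
  · intro hm
    have := (h.2 _ hm).2.1
    simp only at this
    omega

lemma ndom_full {n : ℕ} {lam mu : ℕ → ℕ} {x : ℕ → ℕ → ℤ} {M : Finset (ℕ × ℕ)}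
    (hmu : IsPartition n mu) (h : IsMGTZ n mu x M) (i : ℕ) (hi : 1 ≤ i) (hin : i ≤ n) :
    Ndom (mu 1) lam (Upsilon n x M) i i = lam i + wtT n (mu 1) (Upsilon n x M) i := by
  unfold Ndom wtT
  congr 1
  refine Finset.sum_subset (Finset.Icc_subset_Icc le_rfl hin) fun r h1 h2 => ?_
  simp only [Finset.mem_Icc] at h1 h2
  exact rowOcc_zero hmu h r i hi hin (by omega)

lemma rowOcc_eq {n : ℕ} {lam mu nu : ℕ → ℕ} {x x' : ℕ → ℕ → ℤ} {M M' : Finset (ℕ × ℕ)}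
    (hmu : IsPartition n mu) (h : IsMGTZ n mu x M) (h' : IsMGTZ n mu x' M')
    (hwt : ∀ i, 1 ≤ i → i ≤ n → lam i + wtT n (mu 1) (Upsilon n x M) i = nu i)
    (hwt' : ∀ i, 1 ≤ i → i ≤ n → lam i + wtT n (mu 1) (Upsilon n x' M') i = nu i)
    (hY : ∀ i j, i ≤ n → Ypat n (mu 1) lam (Upsilon n x M) i j
      = Ypat n (mu 1) lam (Upsilon n x' M') i j)
    (r i : ℕ) (hr : 1 ≤ r) (hi : 1 ≤ i) (hin : i ≤ n) :
    rowOcc (mu 1) (Upsilon n x M) r i = rowOcc (mu 1) (Upsilon n x' M') r i := by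
  have hN : ∀ k, k ≤ i → Ndom (mu 1) lam (Upsilon n x M) i k
      = Ndom (mu 1) lam (Upsilon n x' M') i k := by
    intro k hk
    rcases hk.lt_or_eq with hk | rfl
    · have := hY (n - k) (i - k) (by omega)
      simp only [Ypat] at this
      rw [if_pos (by omega), if_pos (by omega)] at this
      rw [show n - (n - k) + (i - k) = i by omega, show n - (n - k) = k by omega] at this
      exact_mod_cast this
    · rw [ndom_full hmu h k hi hin, ndom_full hmu h' k hi hin, hwt k hi hin, hwt' k hi hin]
  by_cases hri : r ≤ i
  · obtain ⟨k, rfl⟩ : ∃ k, r = k + 1 := ⟨r - 1, by omega⟩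
    have a := hN (k + 1) hri
    have b := hN k (by omega)
    unfold Ndom at a b
    rw [Finset.sum_Icc_succ_top (by omega), Finset.sum_Icc_succ_top (by omega)] at a
    omega
  · rw [rowOcc_zero hmu h r i hi hin (by omega), rowOcc_zero hmu h' r i hi hin (by omega)]

/-- The map `Γ : SVT^lam_{nu-lam}(mu) → SVCT^mu_{nu-mu}(lam)`,
`Γ(T) = Ω(Y_T, M'_T)` (with `(x,M) = Υ⁻¹(T)`, `y_{i,j} = N_{n-i+j,n-i}` and
`M'_T = {(n+1-j,i-j) : (i,j) ∈ M}`), is injective: `Γ(T) = Γ(T')` implies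
`T = T'`. -/
theorem gamma_injective (n : ℕ) (hn : 0 < n) (lam mu nu : ℕ → ℕ)
    (hlam : IsPartition n lam) (hmu : IsPartition n mu) (hnu : IsPartition n nu)
    (T T' : ℕ → ℕ → Finset ℕ)
    (hT : IsSSVT n (ShapeBox mu) T)
    (hdom : LamDominant n lam (rowWordRect n (mu 1) T))
    (hwt : ∀ i, 1 ≤ i → i ≤ n → lam i + wtT n (mu 1) T i = nu i)
    (hT' : IsSSVT n (ShapeBox mu) T')
    (hdom' : LamDominant n lam (rowWordRect n (mu 1) T'))
    (hwt' : ∀ i, 1 ≤ i → i ≤ n → lam i + wtT n (mu 1) T' i = nu i)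
    (x x' : ℕ → ℕ → ℤ) (M M' : Finset (ℕ × ℕ))
    (hxM : IsMGTZ n mu x M) (hUps : Upsilon n x M = T)
    (hxM' : IsMGTZ n mu x' M') (hUps' : Upsilon n x' M' = T')
    (heq : Omega n lam (Ypat n (mu 1) lam T) (MarksOf n M) =
           Omega n lam (Ypat n (mu 1) lam T') (MarksOf n M')) :
    T = T' := by
  subst hUps hUps'
  have hzero : ∀ T j, Ypat n (mu 1) lam T 0 j = 0 := by
    intro T j
    unfold Ypat
    rw [if_neg (by omega)]
  have hY : ∀ i j, i ≤ n → Ypat n (mu 1) lam (Upsilon n x M) i j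
      = Ypat n (mu 1) lam (Upsilon n x' M') i j := by
    intro i j hi
    have m := ypat_mono hxM (mu 1) hdom j
    have m' := ypat_mono hxM' (mu 1) hdom' j
    refine le_antisymm ?_ ?_
    · exact omega_le j m m' (hzero _ _) (fun i => ypat_nonneg _ _ _ _ i j)
        (ypat_last_le hlam _ _ j) heq i hi
    · exact omega_le j m' m (hzero _ _) (fun i => ypat_nonneg _ _ _ _ i j)
        (ypat_last_le hlam _ _ j) heq.symm i hi
  have hle : ∀ i j, i ≤ n → Ypat n (mu 1) lam (Upsilon n x M) i j ≤ lam 1 := fun i j hi =>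
    (ypat_mono hxM (mu 1) hdom j i n hi le_rfl).trans (ypat_last_le hlam _ _ j)
  have hle' : ∀ i j, i ≤ n → Ypat n (mu 1) lam (Upsilon n x' M') i j ≤ lam 1 := fun i j hi =>
    (ypat_mono hxM' (mu 1) hdom' j i n hi le_rfl).trans (ypat_last_le hlam _ _ j)
  have hMM : M = M' := Finset.Subset.antisymm
    (marks_subset hxM.2 hxM'.2 hY hle heq)
    (marks_subset hxM'.2 hxM.2 (fun i j hi => (hY i j hi).symm) hle' heq.symm)
  have hx : ∀ i r, i ≤ n → x i r = x' i r := by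
    intro i r
    induction i with
    | zero =>
      intro _
      rw [hxM.1.1.2 0 r (by omega), hxM'.1.1.2 0 r (by omega)]
    | succ i ih =>
      intro hi
      by_cases hr : 1 ≤ r
      · have e := rowOcc_eq hmu hxM hxM' hwt hwt' hY r (i + 1) hr (by omega) hi
        have e1 := rowOcc_upsilon hmu hxM r (i + 1) (by omega) hi
        have e2 := rowOcc_upsilon hmu hxM' r (i + 1) (by omega) hi
        rw [e, e2, hMM] at e1
        have := ih (by omega)
        simp only [Nat.add_sub_cancel] at e1
        omega
      · rw [hxM.1.1.2 _ r (by omega), hxM'.1.1.2 _ r (by omega)]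
  have hxx : x = x' := by
    funext i r
    by_cases hi : i ≤ n
    · exact hx i r hi
    · rw [hxM.1.1.2 _ r (by omega), hxM'.1.1.2 _ r (by omega)]
  rw [hxx, hMM]
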